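/- Let A be a unital C*-algebra, let φ : A → ℂ be a state (a linear functional with φ(1) = 1 and φ(a* a) ≥ 0 for all a ∈ A; such a functional is automatically bounded of norm 1), let β be a *-automorphism of A satisfying φ ∘ β = φ, and let u ∈ A be a unitary. Then for all y, z ∈ A: |φ(β(z) y) − φ(u z u* y)| ≤ φ((β⁻¹(y) − u* y u)* (β⁻¹(y) − u* y u))^{1/2} · ‖z‖ + ‖φ ∘ Ad u − φ‖ · ‖y‖ · ‖z‖, where Ad u (x) := u x u* and ‖φ ∘ Ad u − φ‖ := sup{ |φ(u w u*) − φ(w)| : w ∈ A, ‖w‖ ≤ 1 }. -/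

import Mathlib

/-!
Since `φ` is `β`-invariant, `φ (β z * y) = φ (z * β⁻¹ y)`, and since `u * star u = 1`,
`u * z * star u * y` is the conjugate by `u` of `z * (star u * y * u)`. Replacing `β⁻¹ y` by
`star u * y * u` is controlled by the Cauchy–Schwarz inequality in the GNS space of `φ`, and
removing the conjugation by `u` is controlled by the norm of `φ ∘ Ad u - φ`.
-/

open scoped ComplexOrder

section OperatorNorm

variable {𝕜 E F : Type*} [SeminormedAddCommGroup F]

lemma iSup_norm_apply_eq_opNorm {𝕜₂ : Type*} [DenselyNormedField 𝕜]
    [NontriviallyNormedField 𝕜₂] [NormedAddCommGroup E] [NormedSpace 𝕜 E] [NormedSpace 𝕜₂ F]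
    {σ : 𝕜 →+* 𝕜₂} [RingHomIsometric σ] (g : E →SL[σ] F) :
    ⨆ w : {w : E // ‖w‖ ≤ 1}, ‖g w‖ = ‖g‖ := by
  rw [← g.sSup_unitClosedBall_eq_norm, sSup_image']
  exact (Equiv.subtypeEquivRight fun _ ↦ mem_closedBall_zero_iff.symm).iSup_congr fun _ ↦ rfl

lemma norm_apply_mul_mul_sub_apply_le [DenselyNormedField 𝕜] [NormedSpace 𝕜 F]
    [NonUnitalNormedRing E] [NormedSpace 𝕜 E] [IsScalarTower 𝕜 E E] [SMulCommClass 𝕜 E E]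
    (g : E →L[𝕜] F) (a b x : E) :
    ‖g (a * x * b) - g x‖ ≤
      (⨆ w : {w : E // ‖w‖ ≤ 1}, ‖g (a * (w : E) * b) - g (w : E)‖) * ‖x‖ := by
  let defect : E →L[𝕜] F := g ∘L ContinuousLinearMap.mulLeftRight 𝕜 E a b - g
  have defect_apply (w : E) : defect w = g (a * w * b) - g w := by simp [defect]
  simpa only [← iSup_norm_apply_eq_opNorm, defect_apply] using defect.le_opNorm x

end OperatorNorm

lemma norm_le_one_of_mul_star_self_eq_one {A : Type*} [NormedRing A] [StarRing A] [CStarRing A]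
    {u : A} (hu : u * star u = 1) : ‖u‖ ≤ 1 := by
  have h : ‖u‖ * ‖u‖ ≤ 1 := by
    rw [← CStarRing.norm_self_mul_star, hu]
    exact (IsStarProjection.one A).norm_le
  nlinarith

lemma norm_star_mul_mul_le_of_mul_star_self_eq_one {A : Type*} [NormedRing A] [StarRing A]
    [CStarRing A] {u : A} (hu : u * star u = 1) (y : A) : ‖star u * y * u‖ ≤ ‖y‖ := by
  have hu_norm : ‖u‖ ≤ 1 := norm_le_one_of_mul_star_self_eq_one hu
  calc ‖star u * y * u‖ ≤ ‖star u‖ * ‖y‖ * ‖u‖ := norm_mul₃_le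
    _ ≤ 1 * ‖y‖ * 1 := by rw [norm_star]; gcongr
    _ = ‖y‖ := by ring

section PositiveFunctional

variable {A : Type*} [PartialOrder A]

lemma norm_apply_star_mul_le [NonUnitalCStarAlgebra A] [StarOrderedRing A] (f : A →ₚ[ℂ] ℂ)
    (a b : A) :
    ‖f (star a * b)‖ ≤ √(f (star a * a)).re * √(f (star b * b)).re :=
  norm_inner_le_norm (𝕜 := ℂ) (f.toPreGNS a) (f.toPreGNS b)

lemma sqrt_re_apply_star_mul_self_le [CStarAlgebra A] [StarOrderedRing A] (f : A →ₚ[ℂ] ℂ)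
    (a : A) : √(f (star a * a)).re ≤ √(f 1).re * ‖a‖ := by
  have h_one : (f 1).re = ‖f 1‖ := Complex.re_eq_norm.mpr (f.map_nonneg zero_le_one)
  calc √(f (star a * a)).re ≤ √(‖f 1‖ * ‖star a * a‖) :=
        Real.sqrt_le_sqrt <| (Complex.re_le_norm _).trans <|
          f.norm_apply_le_of_nonneg _ (star_mul_self_nonneg a)
    _ = √(f 1).re * ‖a‖ := by
        rw [CStarRing.norm_star_mul_self, Real.sqrt_mul (norm_nonneg _),
          Real.sqrt_mul_self (norm_nonneg _), h_one]

lemma norm_apply_mul_le [CStarAlgebra A] [StarOrderedRing A] (f : A →ₚ[ℂ] ℂ) (a b : A) :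
    ‖f (a * b)‖ ≤ √(f 1).re * √(f (star b * b)).re * ‖a‖ := by
  have h_star := sqrt_re_apply_star_mul_self_le f (star a)
  rw [norm_star] at h_star
  calc ‖f (a * b)‖ = ‖f (star (star a) * b)‖ := by rw [star_star]
    _ ≤ √(f (star (star a) * star a)).re * √(f (star b * b)).re := norm_apply_star_mul_le f _ _
    _ ≤ √(f 1).re * ‖a‖ * √(f (star b * b)).re := by gcongr
    _ = √(f 1).re * √(f (star b * b)).re * ‖a‖ := by ring

end PositiveFunctional

lemma exists_positiveLinearMap_toLinearMap_eq {A : Type*} [NonUnitalCStarAlgebra A]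
    [PartialOrder A] [StarOrderedRing A] (φ : A →ₗ[ℂ] ℂ) (hφ : ∀ a, 0 ≤ φ (star a * a)) :
    ∃ f : A →ₚ[ℂ] ℂ, f.toLinearMap = φ := by
  refine ⟨.mk₀ φ fun a ha ↦ ?_, rfl⟩
  obtain ⟨b, rfl⟩ := CStarAlgebra.nonneg_iff_eq_star_mul_self.mp ha
  exact hφ b

/-- For an automorphism `β`, `x` plays the role of `β⁻¹ y`. -/
theorem state_automorphism_unitary_perturbation_estimate_general
    {A F : Type*} [CStarAlgebra A] [FunLike F A A] [MulHomClass F A A]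
    (φ : A →ₗ[ℂ] ℂ) (hφ : ∀ a, 0 ≤ φ (star a * a))
    (β : F) (hβφ : ∀ a, φ (β a) = φ a) {u : A} (hu : u * star u = 1) (x z : A) :
    ‖φ (β z * β x) - φ (u * z * star u * β x)‖ ≤
      √(φ 1).re *
          √(φ (star (x - star u * β x * u) * (x - star u * β x * u))).re * ‖z‖
        + (⨆ w : {w : A // ‖w‖ ≤ 1}, ‖φ (u * (w : A) * star u) - φ (w : A)‖)
          * ‖β x‖ * ‖z‖ := by
  let _ : PartialOrder A := CStarAlgebra.spectralOrder A
  have : StarOrderedRing A := CStarAlgebra.spectralOrderedRing A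
  obtain ⟨f, rfl⟩ := exists_positiveLinearMap_toLinearMap_eq φ hφ
  simp only [PositiveLinearMap.coe_toLinearMap] at hβφ ⊢
  set S := ⨆ w : {w : A // ‖w‖ ≤ 1}, ‖f (u * (w : A) * star u) - f (w : A)‖
  set y' := star u * β x * u with hy'
  have invariance : f (β z * β x) = f (z * x) := by rw [← map_mul, hβφ]
  have conjugation : u * z * star u * β x = u * (z * y') * star u := by
    simp only [hy', mul_assoc, hu, mul_one]
  have decomposition : f (β z * β x) - f (u * z * star u * β x) =
      f (z * (x - y')) - (f (u * (z * y') * star u) - f (z * y')) := by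
    rw [invariance, conjugation, mul_sub, map_sub]
    ring
  have defect_bound : ‖f (u * (z * y') * star u) - f (z * y')‖ ≤ S * ‖β x‖ * ‖z‖ :=
    calc ‖f (u * (z * y') * star u) - f (z * y')‖ ≤ S * ‖z * y'‖ :=
          norm_apply_mul_mul_sub_apply_le ⟨f.toLinearMap, map_continuous f⟩ u (star u) (z * y')
      _ ≤ S * (‖z‖ * ‖β x‖) := by
          gcongr
          · exact Real.iSup_nonneg fun _ ↦ norm_nonneg _
          · exact norm_mul_le_of_le le_rfl (norm_star_mul_mul_le_of_mul_star_self_eq_one hu _)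
      _ = S * ‖β x‖ * ‖z‖ := by ring
  rw [decomposition]
  exact (norm_sub_le _ _).trans (add_le_add (norm_apply_mul_le f z (x - y')) defect_bound)

/-- Perturbation estimate for a state `φ` on a unital C*-algebra `A`, a `φ`-preserving
*-automorphism `β` and a unitary `u`: for all `y z ∈ A`,
`|φ(β(z) y) − φ(u z u* y)| ≤ φ((β⁻¹(y) − u* y u)* (β⁻¹(y) − u* y u))^{1/2} ‖z‖
  + ‖φ ∘ Ad u − φ‖ ‖y‖ ‖z‖`,
where `‖φ ∘ Ad u − φ‖ = sup { |φ(u w u*) − φ(w)| : ‖w‖ ≤ 1 }`. -/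
theorem state_automorphism_unitary_perturbation_estimate
    {A : Type*} [NormedRing A] [StarRing A] [CStarRing A]
    [NormedAlgebra ℂ A] [CompleteSpace A] [StarModule ℂ A]
    (φ : A →ₗ[ℂ] ℂ) (hφ1 : φ 1 = 1)
    (hφpos : ∀ a : A, ∃ r : ℝ, 0 ≤ r ∧ φ (star a * a) = (r : ℂ))
    (β : A ≃⋆ₐ[ℂ] A) (hβφ : ∀ a : A, φ (β a) = φ a)
    (u : A) (hu : u ∈ unitary A) (y z : A) :
    ‖φ (β z * y) - φ (u * z * star u * y)‖ ≤
      Real.sqrt ((φ (star (β.symm y - star u * y * u) * (β.symm y - star u * y * u))).re)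
          * ‖z‖
        + (⨆ w : {w : A // ‖w‖ ≤ 1}, ‖φ (u * (w : A) * star u) - φ (w : A)‖)
          * ‖y‖ * ‖z‖ := by
  let _ : CStarAlgebra A := {}
  have hφ (a : A) : 0 ≤ φ (star a * a) := by obtain ⟨r, hr, h⟩ := hφpos a; simpa [h] using hr
  simpa [hφ1] using state_automorphism_unitary_perturbation_estimate_general φ hφ β hβφ
    (Unitary.mul_star_self_of_mem hu) (β.symm y) z
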